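/- For every natural number n ≥ 8 and every k with 2 ≤ k and 2k ≤ n², one has (as real numbers) p_k(n,n) − p_{k−1}(n,n) ≥ C · 2^{√(2k)} / (2k)^{9/4}, where C = √(27/8)/π². -/

import Mathlib

/-- `rectPartitions k l m` is the number of integer partitions of `k` fitting in an
`l × m` rectangle: at most `l` parts, each part at most `m`. -/
noncomputable def rectPartitions (k l m : ℕ) : ℕ :=
  Nat.card {π : Nat.Partition k // Multiset.card π.parts ≤ l ∧ ∀ i ∈ π.parts, i ≤ m}

/-!
The partitions fitting in an `l × m` rectangle are counted by the weight multiplicities of the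
`l`-th symmetric power of the irreducible `sl₂`-representation of dimension `m + 1`. Raising is
injective below the middle weight, so the coefficients of `binom(l + m, m)_q` increase up to the
middle. With the `q`-Pascal recurrence this makes the gap `p_k(n, n) - p_{k-1}(n, n)` increase with
`n` as long as `2k ≤ n ^ 2`, which reduces the bound to the smallest such `n`, or to `n = 8` if that
is smaller than `8`.

If this `n` is at least `140`, write the gap as a Fourier integral over `q` on the unit circle. Near
`q = 1` the integrand is nonnegative, as `n ^ 2 - 2k < 2n`, and for arguments of order `1 / n ^ 2`
it is of size `binom(2n, n)` up to a power of `n`. Elsewhere `|binom(2n, n)_q| ≤ 3 ^ n`, since by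
the `q`-binomial theorem it is at most the maximum over `|z| = 1` of `∏_{i < 2n} |1 + q ^ i z|`,
where the `q ^ i` are spread out over the circle and AM-GM applies to the squares of the factors. As
`binom(2n, n)` grows like `4 ^ n`, the peak wins.

If `n < 140`, the gap is read off the digits of the value of `binom(2n, n)_q` at a large power of
`2` (Kronecker substitution).
-/

section BoxMultisets

open Finset

/-- The multisets of exactly `l` naturals that are at most `m`. They encode the partitions fitting
in an `l × m` rectangle, each one padded with zero parts to exactly `l` parts. -/
def boxMultisets (l m : ℕ) : Finset (Multiset ℕ) :=
  ((range (m + 1)).sym l).map ⟨Sym.toMultiset, Sym.coe_injective⟩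

variable {l m k : ℕ} {s : Multiset ℕ}

theorem mem_boxMultisets : s ∈ boxMultisets l m ↔ s.card = l ∧ ∀ i ∈ s, i ≤ m := by
  simp only [boxMultisets, mem_map, mem_sym_iff, mem_range, Nat.lt_succ_iff,
    Function.Embedding.coeFn_mk]
  constructor
  · rintro ⟨s, hs, rfl⟩
    exact ⟨s.card_coe, hs⟩
  · rintro ⟨rfl, hs⟩
    exact ⟨Sym.mk s rfl, hs, rfl⟩

theorem boxMultisets_zero_left (m : ℕ) : boxMultisets 0 m = {0} := by
  ext s
  simp +contextual [mem_boxMultisets]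

theorem boxMultisets_zero_right (l : ℕ) : boxMultisets l 0 = {Multiset.replicate l 0} := by
  ext s
  simp [mem_boxMultisets, Multiset.eq_replicate]

theorem boxMultisets_succ_succ (l m : ℕ) :
    boxMultisets (l + 1) (m + 1) =
      boxMultisets (l + 1) m ∪ (boxMultisets l (m + 1)).image ((m + 1) ::ₘ ·) := by
  ext s
  simp only [mem_union, mem_image, mem_boxMultisets]
  constructor
  · rintro ⟨hcard, hle⟩
    by_cases hm : m + 1 ∈ s
    · obtain ⟨t, rfl⟩ := Multiset.exists_cons_of_mem hm
      exact .inr ⟨t, ⟨by simpa using hcard, fun i hi ↦ hle i (Multiset.mem_cons_of_mem hi)⟩, rfl⟩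
    · exact .inl ⟨hcard, fun i hi ↦ Nat.le_of_lt_succ <|
        lt_of_le_of_ne (hle i hi) <| ne_of_mem_of_not_mem hi hm⟩
  · rintro (⟨hcard, hle⟩ | ⟨t, ⟨hcard, hle⟩, rfl⟩)
    · exact ⟨hcard, fun i hi ↦ (hle i hi).trans m.le_succ⟩
    · simpa [hcard] using hle

theorem disjoint_boxMultisets_image_cons (l m : ℕ) :
    Disjoint (boxMultisets (l + 1) m) ((boxMultisets l (m + 1)).image ((m + 1) ::ₘ ·)) := by
  simp only [disjoint_left, mem_image, mem_boxMultisets]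
  rintro _ ⟨-, hle⟩ ⟨t, -, rfl⟩
  exact (hle _ (Multiset.mem_cons_self _ t)).not_gt m.lt_succ_self

theorem filter_ne_zero_add_replicate_zero (s : Multiset ℕ) :
    s.filter (· ≠ 0) + Multiset.replicate (s.card - (s.filter (· ≠ 0)).card) 0 = s := by
  have hsplit := Multiset.filter_add_not (· ≠ 0) s
  simp only [ne_eq, not_not, Multiset.filter_eq'] at hsplit
  have hcard := congrArg Multiset.card hsplit
  rw [Multiset.card_add, Multiset.card_replicate] at hcard
  rwa [← hcard, Nat.add_sub_cancel_left]

theorem rectPartitions_eq_card (k l m : ℕ) :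
    rectPartitions k l m = #{s ∈ boxMultisets l m | s.sum = k} := by
  rw [← Fintype.card_coe, ← Nat.card_eq_fintype_card]
  simp only [rectPartitions, mem_filter, mem_boxMultisets]
  refine Nat.card_congr
    { toFun π := ⟨π.1.parts + Multiset.replicate (l - π.1.parts.card) 0, ⟨?_, ?_⟩, ?_⟩
      invFun s := ⟨.ofSums k s.1 s.2.2, ?_, ?_⟩
      left_inv := ?_
      right_inv := ?_ }
  · simp [π.2.1]
  · simpa [or_imp, forall_and, Multiset.mem_replicate] using π.2.2
  · simp [π.1.parts_sum]
  · exact (Multiset.card_le_card (Multiset.filter_le _ _)).trans s.2.1.1.le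
  · exact fun i hi ↦ s.2.1.2 i (Multiset.mem_of_mem_filter hi)
  · rintro ⟨π, -, -⟩
    have hparts : π.parts.filter (· ≠ 0) = π.parts :=
      Multiset.filter_eq_self.2 fun i hi ↦ (π.parts_pos hi).ne'
    ext1
    ext1
    simp [Nat.Partition.ofSums, Multiset.filter_add, hparts, Multiset.filter_eq_nil,
      Multiset.mem_replicate]
  · rintro ⟨s, ⟨rfl, -⟩, -⟩
    exact Subtype.ext (filter_ne_zero_add_replicate_zero s)

end BoxMultisets

section GaussBinom

open Finset Polynomial

/-- The Gaussian binomial coefficient `binom(l + m, m)_q`, as the generating polynomial of the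
partitions fitting in an `l × m` rectangle. -/
noncomputable def gaussBinom (l m : ℕ) : ℤ[X] :=
  ∑ s ∈ boxMultisets l m, X ^ s.sum

theorem coeff_gaussBinom (l m k : ℕ) : (gaussBinom l m).coeff k = rectPartitions k l m := by
  simp [gaussBinom, finsetSum_coeff, coeff_X_pow, rectPartitions_eq_card, eq_comm, sum_boole]

theorem gaussBinom_zero_left (m : ℕ) : gaussBinom 0 m = 1 := by
  simp [gaussBinom, boxMultisets_zero_left]

theorem gaussBinom_zero_right (l : ℕ) : gaussBinom l 0 = 1 := by
  simp [gaussBinom, boxMultisets_zero_right]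

theorem gaussBinom_succ_succ (l m : ℕ) :
    gaussBinom (l + 1) (m + 1) = gaussBinom (l + 1) m + X ^ (m + 1) * gaussBinom l (m + 1) := by
  simp only [gaussBinom, boxMultisets_succ_succ, mul_sum,
    sum_union (disjoint_boxMultisets_image_cons l m)]
  rw [sum_image fun _ _ _ _ ↦ (Multiset.cons_inj_right _).1]
  simp only [Multiset.sum_cons, pow_add]

theorem eval_one_gaussBinom : ∀ l m : ℕ, (gaussBinom l m).eval 1 = (l + m).choose m
  | 0, m => by simp [gaussBinom_zero_left]
  | l + 1, 0 => by simp [gaussBinom_zero_right]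
  | l + 1, m + 1 => by
    rw [gaussBinom_succ_succ, eval_add, eval_mul, eval_pow, eval_X, one_pow, one_mul,
      eval_one_gaussBinom (l + 1) m, eval_one_gaussBinom l (m + 1), ← add_assoc (l + 1) m 1,
      Nat.choose_succ_succ, show l + (m + 1) = l + 1 + m by ring]
    push_cast
    rfl

theorem coeff_gaussBinom_nonneg (l m k : ℕ) : 0 ≤ (gaussBinom l m).coeff k := by
  rw [coeff_gaussBinom]
  positivity

theorem coeff_gaussBinom_le_two_pow (l m k : ℕ) : (gaussBinom l m).coeff k ≤ 2 ^ (l + m) := by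
  calc (gaussBinom l m).coeff k
      ≤ (gaussBinom l m).eval 1 := by
        rw [eval_eq_sum, Polynomial.sum]
        by_cases hk : k ∈ (gaussBinom l m).support
        · simpa using single_le_sum (fun i _ ↦ coeff_gaussBinom_nonneg l m i) hk
        · rw [notMem_support_iff.1 hk]
          simpa using sum_nonneg fun i _ ↦ coeff_gaussBinom_nonneg l m i
    _ = (l + m).choose m := eval_one_gaussBinom l m
    _ ≤ 2 ^ (l + m) := by exact_mod_cast Nat.choose_le_two_pow _ _

/-- The finite `q`-Pochhammer symbol `(q; q)_n`. -/
noncomputable def qPochhammer (n : ℕ) : ℤ[X] :=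
  ∏ i ∈ range n, (1 - X ^ (i + 1))

theorem qPochhammer_succ (n : ℕ) : qPochhammer (n + 1) = qPochhammer n * (1 - X ^ (n + 1)) :=
  prod_range_succ _ n

theorem qPochhammer_ne_zero (n : ℕ) : qPochhammer n ≠ 0 :=
  prod_ne_zero_iff.2 fun i _ h ↦ by simpa using congrArg (eval 0) h

theorem gaussBinom_mul_qPochhammer : ∀ l m : ℕ,
    gaussBinom l m * (qPochhammer l * qPochhammer m) = qPochhammer (l + m)
  | 0, m => by simp [gaussBinom_zero_left, qPochhammer]
  | l + 1, 0 => by simp [gaussBinom_zero_right, qPochhammer]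
  | l + 1, m + 1 => by
    have ih₁ := gaussBinom_mul_qPochhammer (l + 1) m
    have ih₂ := gaussBinom_mul_qPochhammer l (m + 1)
    rw [show l + (m + 1) = l + 1 + m by ring] at ih₂
    rw [gaussBinom_succ_succ, ← add_assoc (l + 1) m 1, qPochhammer_succ (l + 1 + m)]
    rw [qPochhammer_succ m] at ih₂ ⊢
    rw [qPochhammer_succ l] at ih₁ ⊢
    linear_combination (1 - X ^ (m + 1)) * ih₁ + X ^ (m + 1) * (1 - X ^ (l + 1)) * ih₂

theorem gaussBinom_comm (l m : ℕ) : gaussBinom l m = gaussBinom m l := by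
  refine mul_right_cancel₀ (mul_ne_zero (qPochhammer_ne_zero l) (qPochhammer_ne_zero m)) ?_
  rw [gaussBinom_mul_qPochhammer, mul_comm (qPochhammer l), gaussBinom_mul_qPochhammer, add_comm]

theorem gaussBinom_succ_succ' (l m : ℕ) :
    gaussBinom (l + 1) (m + 1) = gaussBinom l (m + 1) + X ^ (l + 1) * gaussBinom (l + 1) m := by
  rw [gaussBinom_comm, gaussBinom_succ_succ, gaussBinom_comm (m + 1), gaussBinom_comm m]

theorem gaussBinom_succ_self_mul (m : ℕ) :
    gaussBinom (m + 1) (m + 1) * (1 - X ^ (m + 1)) ^ 2 =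
      gaussBinom m m * (1 - X ^ (2 * m + 1)) * (1 - X ^ (2 * m + 2)) := by
  have h := gaussBinom_mul_qPochhammer (m + 1) (m + 1)
  rw [show m + 1 + (m + 1) = m + m + 1 + 1 by ring, qPochhammer_succ (m + m + 1),
    qPochhammer_succ (m + m), ← gaussBinom_mul_qPochhammer m m, qPochhammer_succ m] at h
  refine mul_right_cancel₀ (mul_ne_zero (qPochhammer_ne_zero m) (qPochhammer_ne_zero m)) ?_
  rw [two_mul]
  linear_combination h

end GaussBinom

section WeightedDerivation

open MvPolynomial

variable {R σ M : Type*} [CommRing R] [AddCommMonoid M] {w : σ → M} {n : M} {φ : MvPolynomial σ R}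

theorem isWeightedHomogeneous_mkDerivation {f : σ → MvPolynomial σ R} {c : M}
    (hf : ∀ i, (f i).IsWeightedHomogeneous w (w i + c)) (hφ : φ.IsWeightedHomogeneous w n) :
    (mkDerivation R f φ).IsWeightedHomogeneous w (n + c) := by
  induction hφ using IsWeightedHomogeneous.induction_on with
  | zero => simpa using isWeightedHomogeneous_zero R w (n + c)
  | add p q _ _ hp hq => simpa using hp.add hq
  | monomial d r hd =>
    rw [mkDerivation_monomial]
    refine Submodule.smul_mem (weightedHomogeneousSubmodule R w (n + c)) r <|
      Submodule.sum_mem _ fun i hi ↦ ?_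
    rw [← hd, ← Finsupp.weight_sub_single_add (Finsupp.mem_support_iff.1 hi), add_assoc]
    exact (isWeightedHomogeneous_monomial w _ _ rfl).mul (hf i)

theorem mkDerivation_smul_X_eq_smul (g : M →+ R) (hφ : φ.IsWeightedHomogeneous w n) :
    mkDerivation R (fun i ↦ g (w i) • X i) φ = g n • φ := by
  induction hφ using IsWeightedHomogeneous.induction_on with
  | zero => simp
  | add p q _ _ hp hq => rw [map_add, hp, hq, smul_add]
  | monomial d r hd =>
    simp only [mkDerivation_monomial, Finsupp.sum]
    rw [← hd, Finsupp.weight_apply, Finsupp.sum, map_sum, Finset.sum_smul, Finset.smul_sum]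
    refine Finset.sum_congr rfl fun i hi ↦ ?_
    have hle : Finsupp.single i 1 ≤ d := by
      simpa [Nat.one_le_iff_ne_zero] using hi
    rw [smul_eq_mul, mul_smul_comm, X, monomial_mul, tsub_add_cancel_of_le hle, smul_monomial,
      smul_monomial, smul_monomial, map_nsmul]
    congr 1
    simp only [smul_eq_mul, nsmul_eq_mul]
    ring

end WeightedDerivation

section Sl2

open MvPolynomial Finset

variable (m : ℕ)

/-- The bidegree of the variables of `ℚ[X₀, …, X_m]` for which a monomial, read as a multiset of
indices, has weight `(number of parts, sum of the parts)`. -/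
def partWeight (i : Fin (m + 1)) : ℕ × ℤ := (1, i)

/-- The raising operator of `sl₂` on `ℚ[X₀, …, X_m]`, the symmetric algebra of the irreducible
representation of dimension `m + 1`. -/
noncomputable def raising :
    Derivation ℚ (MvPolynomial (Fin (m + 1)) ℚ) (MvPolynomial (Fin (m + 1)) ℚ) :=
  mkDerivation ℚ fun i ↦ (m - i : ℚ) • X (i + 1)

/-- The lowering operator of `sl₂` on `ℚ[X₀, …, X_m]`. -/
noncomputable def lowering :
    Derivation ℚ (MvPolynomial (Fin (m + 1)) ℚ) (MvPolynomial (Fin (m + 1)) ℚ) :=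
  mkDerivation ℚ fun i ↦ (i : ℚ) • X (i - 1)

/-- The Cartan element of `sl₂` acting on `ℚ[X₀, …, X_m]`. -/
noncomputable def cartan :
    Derivation ℚ (MvPolynomial (Fin (m + 1)) ℚ) (MvPolynomial (Fin (m + 1)) ℚ) :=
  mkDerivation ℚ fun i ↦ (2 * i - m : ℚ) • X i

variable {m}

theorem val_add_one_or_eq (i : Fin (m + 1)) :
    ((i + 1 : Fin (m + 1)) : ℕ) = i + 1 ∨ (i : ℕ) = m := by
  rcases Fin.eq_castSucc_or_eq_last i with ⟨j, rfl⟩ | rfl <;> simp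

theorem val_sub_one_add_one_or_eq_zero (i : Fin (m + 1)) :
    ((i - 1 : Fin (m + 1)) : ℕ) + 1 = i ∨ (i : ℕ) = 0 := by
  rcases Fin.eq_zero_or_eq_succ i with rfl | ⟨j, rfl⟩
  · exact .inr rfl
  · rw [← Fin.coeSucc_eq_succ, add_sub_cancel_right, Fin.coeSucc_eq_succ]
    exact .inl rfl

theorem sub_val_mul_val_add_one (i : Fin (m + 1)) :
    (m - i : ℚ) * ((i + 1 : Fin (m + 1)) : ℕ) = (m - i) * (i + 1) := by
  rcases val_add_one_or_eq i with h | h <;> simp [h]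

theorem val_mul_val_sub_one (i : Fin (m + 1)) :
    (i : ℚ) * ((i - 1 : Fin (m + 1)) : ℕ) = i * (i - 1) := by
  rcases val_sub_one_add_one_or_eq_zero i with h | h <;> simp [← h]

theorem isSl2Triple_cartan (hm : m ≠ 0) : IsSl2Triple (cartan m) (raising m) (lowering m) where
  h_ne_zero h := by
    have := DFunLike.congr_fun h (X 0)
    simp [cartan, hm] at this
  lie_e_f := derivation_ext fun i ↦ by
    simp only [cartan, raising, lowering, Derivation.commutator_apply, mkDerivation_X,
      Derivation.map_smul, smul_smul, sub_add_cancel, add_sub_cancel_right, ← sub_smul]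
    congr 1
    linear_combination -val_mul_val_sub_one i - sub_val_mul_val_add_one i
  lie_h_e_nsmul := derivation_ext fun i ↦ by
    simp only [cartan, raising, Derivation.commutator_apply, mkDerivation_X, Derivation.map_smul,
      smul_smul, ← sub_smul, Derivation.smul_apply, ← Nat.cast_smul_eq_nsmul ℚ]
    congr 1
    linear_combination 2 * sub_val_mul_val_add_one i
  lie_h_f_nsmul := derivation_ext fun i ↦ by
    simp only [cartan, lowering, Derivation.commutator_apply, mkDerivation_X, Derivation.map_smul,
      smul_smul, ← sub_smul, Derivation.smul_apply, ← Nat.cast_smul_eq_nsmul ℚ, ← neg_smul]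
    congr 1
    linear_combination 2 * val_mul_val_sub_one i

variable {l : ℕ} {n : ℤ} {φ : MvPolynomial (Fin (m + 1)) ℚ}

theorem isWeightedHomogeneous_raising (hφ : φ.IsWeightedHomogeneous (partWeight m) (l, n)) :
    (raising m φ).IsWeightedHomogeneous (partWeight m) (l, n + 1) := by
  refine isWeightedHomogeneous_mkDerivation (c := (0, 1)) (fun i ↦ ?_) hφ
  rcases val_add_one_or_eq i with h | h
  · rw [show partWeight m i + (0, 1) = partWeight m (i + 1) by simp [partWeight, h]]
    exact (weightedHomogeneousSubmodule ℚ _ _).smul_mem _ (isWeightedHomogeneous_X ℚ _ _)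
  · simpa [h] using isWeightedHomogeneous_zero ℚ _ _

theorem isWeightedHomogeneous_lowering (hφ : φ.IsWeightedHomogeneous (partWeight m) (l, n)) :
    (lowering m φ).IsWeightedHomogeneous (partWeight m) (l, n - 1) := by
  refine isWeightedHomogeneous_mkDerivation (c := (0, -1)) (fun i ↦ ?_) hφ
  rcases val_sub_one_add_one_or_eq_zero i with h | h
  · rw [show partWeight m i + (0, -1) = partWeight m (i - 1) by simp [partWeight, ← h]]
    exact (weightedHomogeneousSubmodule ℚ _ _).smul_mem _ (isWeightedHomogeneous_X ℚ _ _)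
  · simpa [h] using isWeightedHomogeneous_zero ℚ _ _

theorem cartan_apply (hφ : φ.IsWeightedHomogeneous (partWeight m) (l, n)) :
    cartan m φ = (2 * n - m * l : ℚ) • φ := by
  let g : ℕ × ℤ →+ ℚ :=
    { toFun x := 2 * x.2 - m * x.1
      map_zero' := by simp
      map_add' x y := by push_cast [Prod.fst_add, Prod.snd_add]; ring }
  simpa [g, partWeight, cartan] using mkDerivation_smul_X_eq_smul g hφ

theorem weight_partWeight (d : Fin (m + 1) →₀ ℕ) :
    Finsupp.weight (partWeight m) d =
      ((d.toMultiset.map Fin.val).card, (((d.toMultiset.map Fin.val).sum : ℕ) : ℤ)) := by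
  induction d using Finsupp.induction_linear with
  | zero => rfl
  | add d d' hd hd' => simp [hd, hd', -Multiset.card_map]
  | single i a => simp [Finsupp.weight_single, partWeight, Multiset.map_nsmul, Multiset.sum_nsmul]

theorem eq_zero_of_weight_neg (hn : n < 0) (hφ : φ.IsWeightedHomogeneous (partWeight m) (l, n)) :
    φ = 0 := by
  refine hφ.eq_zero_of_no_monomials fun d hd ↦ hn.not_ge ?_
  rw [weight_partWeight, Prod.mk.injEq] at hd
  exact hd.2 ▸ Nat.cast_nonneg _

theorem isWeightedHomogeneous_lowering_pow
    (hφ : φ.IsWeightedHomogeneous (partWeight m) (l, n)) (r : ℕ) :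
    ((LieModule.toEnd ℚ _ _ (lowering m) ^ r) φ).IsWeightedHomogeneous (partWeight m)
      (l, n - r) := by
  induction r with
  | zero => simpa using hφ
  | succ r ih =>
    rw [pow_succ', Nat.cast_succ, ← sub_sub]
    exact isWeightedHomogeneous_lowering ih

/-- A nonzero `φ` would be a primitive vector of negative weight, so lowering would never
annihilate it; but lowering decreases the sum of the parts. -/
theorem eq_zero_of_raising_eq_zero (hn : 2 * n < m * l)
    (hφ : φ.IsWeightedHomogeneous (partWeight m) (l, n)) (h : raising m φ = 0) : φ = 0 := by
  by_contra hne
  have hm : m ≠ 0 := by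
    rintro rfl
    exact hne (eq_zero_of_weight_neg (by lia) hφ)
  have hprim : (isSl2Triple_cartan hm).HasPrimitiveVectorWith φ (2 * n - m * l : ℚ) :=
    ⟨hne, cartan_apply hφ, h⟩
  have hpow (r : ℕ) : (LieModule.toEnd ℚ _ _ (lowering m) ^ r) φ ≠ 0 := by
    induction r with
    | zero => simpa using hne
    | succ r ih =>
      intro h0
      have hraise := hprim.lie_e_pow_succ_toEnd_f r
      rw [h0, lie_zero, eq_comm, smul_eq_zero_iff_left ih] at hraise
      have hn' : (2 * n : ℚ) < m * l := by exact_mod_cast hn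
      nlinarith [Nat.cast_nonneg (α := ℚ) r]
  refine hpow (n.toNat + 1) (eq_zero_of_weight_neg ?_ (isWeightedHomogeneous_lowering_pow hφ _))
  lia

theorem bijOn_toMultiset_map_val (l m k : ℕ) :
    Set.BijOn (fun d : Fin (m + 1) →₀ ℕ ↦ d.toMultiset.map Fin.val)
      {d | Finsupp.weight (partWeight m) d = (l, (k : ℤ))}
      ({s ∈ boxMultisets l m | s.sum = k} : Finset (Multiset ℕ)) := by
  simp only [weight_partWeight, coe_filter, mem_boxMultisets, Prod.mk.injEq, Nat.cast_inj]
  refine ⟨fun d hd ↦ ⟨⟨hd.1, ?_⟩, hd.2⟩, fun d _ d' _ h ↦ ?_, fun s ⟨⟨hcard, hle⟩, hsum⟩ ↦ ?_⟩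
  · simpa using fun i _ ↦ i.is_le
  · exact Multiset.toFinsupp.symm.injective (Multiset.map_injective Fin.val_injective h)
  · lift s to Multiset (Fin (m + 1)) using fun i hi ↦ Nat.lt_succ_of_le (hle i hi)
    refine ⟨s.toFinsupp, ?_, by simp⟩
    simpa [hsum] using hcard

theorem nonempty_basis_weightedHomogeneousSubmodule_partWeight (l m k : ℕ) :
    Nonempty (Module.Basis {s ∈ boxMultisets l m | s.sum = k} ℚ
      (weightedHomogeneousSubmodule ℚ (partWeight m) (l, (k : ℤ)))) := by
  rw [weightedHomogeneousSubmodule_eq_finsupp_supported]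
  exact ⟨(basisRestrictSupport ℚ _).reindex (bijOn_toMultiset_map_val l m k).equiv⟩

theorem finrank_weightedHomogeneousSubmodule_partWeight (l m k : ℕ) :
    Module.finrank ℚ (weightedHomogeneousSubmodule ℚ (partWeight m) (l, (k : ℤ))) =
      rectPartitions k l m := by
  obtain ⟨b⟩ := nonempty_basis_weightedHomogeneousSubmodule_partWeight l m k
  rw [Module.finrank_eq_card_basis b, Fintype.card_coe, rectPartitions_eq_card]

theorem rectPartitions_le_rectPartitions_succ {l m k : ℕ} (h : 2 * k < l * m) :
    rectPartitions k l m ≤ rectPartitions (k + 1) l m := by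
  rw [← finrank_weightedHomogeneousSubmodule_partWeight,
    ← finrank_weightedHomogeneousSubmodule_partWeight]
  obtain ⟨b⟩ := nonempty_basis_weightedHomogeneousSubmodule_partWeight l m (k + 1)
  have := Module.Finite.of_basis b
  let f : weightedHomogeneousSubmodule ℚ (partWeight m) (l, (k : ℤ)) →ₗ[ℚ]
      weightedHomogeneousSubmodule ℚ (partWeight m) (l, ((k + 1 : ℕ) : ℤ)) :=
    (raising m).toLinearMap.restrict fun _ hφ ↦ isWeightedHomogeneous_raising hφ
  refine LinearMap.finrank_le_finrank_of_injective (f := f) <|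
    (injective_iff_map_eq_zero f).2 fun φ hφ ↦ ?_
  have h' : 2 * (k : ℤ) < m * l := by
    rw [mul_comm (m : ℤ)]
    exact_mod_cast h
  exact Subtype.ext <| eq_zero_of_raising_eq_zero h' φ.2 (congrArg Subtype.val hφ)

end Sl2

section CoeffGap

open Polynomial

/-- The difference `p_k(l, m) - p_{k-1}(l, m)` of consecutive coefficients of the Gaussian binomial
coefficient, with `p_{-1} = 0`. -/
noncomputable def coeffGap (l m k : ℕ) : ℤ := ((1 - X) * gaussBinom l m).coeff k

theorem coeffGap_zero (l m : ℕ) : coeffGap l m 0 = rectPartitions 0 l m := by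
  simp [coeffGap, sub_mul, coeff_gaussBinom]

theorem coeffGap_succ (l m k : ℕ) :
    coeffGap l m (k + 1) = rectPartitions (k + 1) l m - rectPartitions k l m := by
  simp [coeffGap, sub_mul, coeff_X_mul, coeff_gaussBinom]

theorem coeffGap_comm (l m k : ℕ) : coeffGap l m k = coeffGap m l k := by
  rw [coeffGap, gaussBinom_comm, coeffGap]

theorem coeffGap_nonneg {l m k : ℕ} (h : 2 * k ≤ l * m + 1) : 0 ≤ coeffGap l m k := by
  rcases k with _ | k
  · simp [coeffGap_zero]
  · rw [coeffGap_succ, sub_nonneg, Nat.cast_le]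
    exact rectPartitions_le_rectPartitions_succ (by lia)

theorem coeffGap_le_succ_right {l m k : ℕ} (h : 2 * k ≤ l * (m + 1)) :
    coeffGap l m k ≤ coeffGap l (m + 1) k := by
  rcases l with _ | l
  · simp [coeffGap, gaussBinom_zero_left]
  · have hrec : coeffGap (l + 1) (m + 1) k = coeffGap (l + 1) m k +
        (X ^ (m + 1) * ((1 - X) * gaussBinom l (m + 1))).coeff k := by
      rw [coeffGap, gaussBinom_succ_succ, mul_add, coeff_add, mul_left_comm, ← coeffGap]
    rw [hrec, coeff_X_pow_mul', le_add_iff_nonneg_right]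
    split_ifs with hmk
    · exact coeffGap_nonneg (by lia)
    · exact le_rfl

theorem coeffGap_self_mono {m n k : ℕ} (hmn : m ≤ n) (h : 2 * k ≤ m * m) :
    coeffGap m m k ≤ coeffGap n n k := by
  induction n, hmn using Nat.le_induction with
  | base => exact le_rfl
  | succ n hmn ih =>
    have hk : 2 * k ≤ n * n := h.trans (Nat.mul_le_mul hmn hmn)
    calc coeffGap m m k ≤ coeffGap n n k := ih
      _ ≤ coeffGap n (n + 1) k := coeffGap_le_succ_right (by lia)
      _ = coeffGap (n + 1) n k := coeffGap_comm ..
      _ ≤ coeffGap (n + 1) (n + 1) k := coeffGap_le_succ_right (by lia)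

end CoeffGap

section QBinomialTheorem

open Finset Polynomial

variable {R : Type*} [CommRing R]

/-- The product `∏_{i < N} (1 + q ^ i X)` on the left-hand side of the `q`-binomial theorem. -/
noncomputable def qBinomialProd (q : R) (N : ℕ) : R[X] :=
  ∏ i ∈ range N, (1 + C (q ^ i) * X)

theorem coeff_zero_qBinomialProd (q : R) (N : ℕ) : (qBinomialProd q N).coeff 0 = 1 := by
  simp [qBinomialProd, coeff_zero_eq_eval_zero, eval_prod]

theorem coeff_succ_qBinomialProd_succ (q : R) (N j : ℕ) :
    (qBinomialProd q (N + 1)).coeff (j + 1) =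
      (qBinomialProd q N).coeff (j + 1) + q ^ N * (qBinomialProd q N).coeff j := by
  rw [qBinomialProd, prod_range_succ, ← qBinomialProd, mul_add, mul_one, coeff_add, ← mul_assoc,
    coeff_mul_X, coeff_mul_C, mul_comm (q ^ N)]

theorem coeff_qBinomialProd_of_lt (q : R) {N j : ℕ} (h : N < j) :
    (qBinomialProd q N).coeff j = 0 := by
  induction N generalizing j with
  | zero => simp [qBinomialProd, coeff_one, h.ne']
  | succ N ih =>
    obtain ⟨j, rfl⟩ := Nat.exists_eq_add_one_of_ne_zero h.ne_bot
    rw [coeff_succ_qBinomialProd_succ, ih (by lia), ih (by lia), mul_zero, add_zero]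

theorem coeff_qBinomialProd (q : R) : ∀ l m : ℕ,
    (qBinomialProd q (l + m)).coeff m = q ^ m.choose 2 * aeval q (gaussBinom l m)
  | l, 0 => by simp [coeff_zero_qBinomialProd, gaussBinom_zero_right]
  | 0, m + 1 => by
    rw [← add_assoc, coeff_succ_qBinomialProd_succ, coeff_qBinomialProd_of_lt q (by lia),
      coeff_qBinomialProd q 0 m, Nat.choose_succ_succ' m 1, Nat.choose_one_right,
      gaussBinom_zero_left, gaussBinom_zero_left]
    ring
  | l + 1, m + 1 => by
    have ih := coeff_qBinomialProd q l (m + 1)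
    rw [← add_assoc, add_right_comm] at ih
    rw [← add_assoc, coeff_succ_qBinomialProd_succ, ih, coeff_qBinomialProd q (l + 1) m,
      Nat.choose_succ_succ' m 1, Nat.choose_one_right, gaussBinom_succ_succ']
    simp only [map_add, map_mul, map_pow, aeval_X]
    ring

end QBinomialTheorem

section CircleBound

open Finset Polynomial

theorem norm_coeff_le_of_norm_eval_le {p : ℂ[X]} {B : ℝ} (h : ∀ z : ℂ, ‖z‖ = 1 → ‖p.eval z‖ ≤ B)
    (j : ℕ) : ‖p.coeff j‖ ≤ B := by
  have hB : 0 ≤ B := (norm_nonneg _).trans (h 1 norm_one)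
  have hsum : ∑ i ∈ p.support, ‖p.coeff i‖ ^ 2 ≤ B ^ 2 := by
    rw [p.sum_sq_norm_coeff_eq_circleAverage]
    refine Real.circleAverage_mono_on_of_le_circle
      (ContinuousOn.circleIntegrable' (by fun_prop)) fun z hz ↦ ?_
    gcongr
    exact h z (by simpa using hz)
  by_cases hj : j ∈ p.support
  · refine (sq_le_sq₀ (norm_nonneg _) hB).1 ?_
    exact (single_le_sum (f := fun i ↦ ‖p.coeff i‖ ^ 2) (fun i _ ↦ by positivity) hj).trans hsum
  · simpa [notMem_support_iff.1 hj] using hB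

theorem prod_le_pow_card_of_sum_le {ι : Type*} {s : Finset ι} {x : ι → ℝ} {A : ℝ}
    (hx : ∀ i ∈ s, 0 ≤ x i) (h : ∑ i ∈ s, x i ≤ #s * A) : ∏ i ∈ s, x i ≤ A ^ #s := by
  rcases s.eq_empty_or_nonempty with rfl | hs
  · simp
  have hcard : (0 : ℝ) < #s := by exact_mod_cast hs.card_pos
  have hAMGM := Real.geom_mean_le_arith_mean s 1 x (by simp) (by simpa using hs) hx
  simp only [Pi.one_apply, Real.rpow_one, one_mul, sum_const, nsmul_one] at hAMGM
  calc ∏ i ∈ s, x i = ((∏ i ∈ s, x i) ^ (#s : ℝ)⁻¹) ^ #s :=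
        (Real.rpow_inv_natCast_pow (prod_nonneg hx) hs.card_ne_zero).symm
    _ ≤ A ^ #s := by
        have := prod_nonneg hx
        gcongr
        exact hAMGM.trans ((div_le_iff₀' hcard).2 h)

theorem sq_norm_one_add_of_norm_eq_one {w : ℂ} (hw : ‖w‖ = 1) : ‖1 + w‖ ^ 2 = 2 + 2 * w.re := by
  have hw' : Complex.normSq w = 1 := by rw [Complex.normSq_eq_norm_sq, hw, one_pow]
  rw [← Complex.normSq_eq_norm_sq, Complex.normSq_add, hw', map_one, one_mul,
    Complex.conj_re]
  ring

theorem norm_geom_sum_mul_norm_sub_one_le {q : ℂ} (hq : ‖q‖ = 1) (N : ℕ) :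
    ‖∑ i ∈ range N, q ^ i‖ * ‖q - 1‖ ≤ 2 := by
  rw [← norm_mul, geom_sum_mul]
  calc ‖q ^ N - 1‖ ≤ ‖q ^ N‖ + ‖(1 : ℂ)‖ := norm_sub_le _ _
    _ = 2 := by rw [norm_pow, hq]; norm_num

theorem norm_aeval_gaussBinom_self_le {n : ℕ} {q : ℂ} (hq : ‖q‖ = 1) (hn : 2 ≤ n * ‖q - 1‖) :
    ‖aeval q (gaussBinom n n)‖ ≤ 3 ^ n := by
  suffices h : ∀ z : ℂ, ‖z‖ = 1 → ‖(qBinomialProd q (n + n)).eval z‖ ≤ 3 ^ n by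
    simpa [coeff_qBinomialProd, hq] using norm_coeff_le_of_norm_eval_le h n
  intro z hz
  have hnorm (i : ℕ) : ‖q ^ i * z‖ = 1 := by simp [hq, hz]
  have hgeom : ‖∑ i ∈ range (n + n), q ^ i‖ ≤ n := by
    have hpos : 0 < ‖q - 1‖ := (norm_nonneg _).lt_of_ne fun h ↦ by norm_num [← h] at hn
    exact le_of_mul_le_mul_right ((norm_geom_sum_mul_norm_sub_one_le hq _).trans hn) hpos
  have hsum : ∑ i ∈ range (n + n), ‖1 + q ^ i * z‖ ^ 2 ≤ (#(range (n + n)) : ℝ) * 3 := by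
    have hre : (∑ i ∈ range (n + n), q ^ i * z).re ≤ n := by
      refine (Complex.re_le_norm _).trans ?_
      rwa [← sum_mul, norm_mul, hz, mul_one]
    simp only [sq_norm_one_add_of_norm_eq_one (hnorm _), sum_add_distrib, ← mul_sum,
      ← Complex.re_sum, sum_const, card_range, nsmul_eq_mul]
    push_cast
    linarith
  refine (sq_le_sq₀ (norm_nonneg _) (by positivity)).1 ?_
  calc ‖(qBinomialProd q (n + n)).eval z‖ ^ 2
      = ∏ i ∈ range (n + n), ‖1 + q ^ i * z‖ ^ 2 := by
        simp [qBinomialProd, eval_prod, prod_pow]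
    _ ≤ 3 ^ (n + n) := by
        simpa using prod_le_pow_card_of_sum_le (fun i _ ↦ by positivity) hsum
    _ = (3 ^ n) ^ 2 := by ring

end CircleBound

section CoeffIntegral

open Complex (I)
open Polynomial
open scoped Real

/-- The function `θ ↦ Re (Q(e^{2iθ}) e^{-2ikθ})`, whose mean over `[0, π/2]` is the coefficient of
`X ^ k` in `Q`. The coefficients of `Q` being real, a quarter period of `e^{iθ}` suffices. -/
noncomputable def coeffIntegrand (Q : ℤ[X]) (k : ℕ) (θ : ℝ) : ℝ :=
  (aeval (Complex.exp (2 * θ * I)) Q * Complex.exp (-(2 * k * θ * I))).re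

theorem coeffIntegrand_eq_sum (Q : ℤ[X]) (k : ℕ) (θ : ℝ) :
    coeffIntegrand Q k θ = ∑ j ∈ Q.support, Q.coeff j * Real.cos (2 * ((j - k : ℤ) : ℝ) * θ) := by
  rw [coeffIntegrand, aeval_def, eval₂_eq_sum, Polynomial.sum, Finset.sum_mul, Complex.re_sum]
  refine Finset.sum_congr rfl fun j _ ↦ ?_
  have hexp : Complex.exp (2 * θ * I) ^ j * Complex.exp (-(2 * k * θ * I)) =
      Complex.exp ((2 * ((j - k : ℤ) : ℝ) * θ : ℝ) * I) := by
    rw [← Complex.exp_nat_mul, ← Complex.exp_add]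
    push_cast
    ring_nf
  rw [eq_intCast, mul_assoc, hexp, ← Complex.ofReal_intCast, Complex.re_ofReal_mul,
    Complex.exp_ofReal_mul_I_re]

theorem continuous_coeffIntegrand (Q : ℤ[X]) (k : ℕ) : Continuous (coeffIntegrand Q k) := by
  rw [funext (coeffIntegrand_eq_sum Q k)]
  fun_prop

theorem integral_cos_two_mul_int_mul (r : ℤ) :
    ∫ θ in (0 : ℝ)..π / 2, Real.cos (2 * r * θ) = if r = 0 then π / 2 else 0 := by
  split_ifs with hr
  · simp [hr]
  · rw [intervalIntegral.integral_comp_mul_left _ (by simpa using hr), integral_cos,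
      show 2 * (r : ℝ) * (π / 2) = r * π by ring, Real.sin_int_mul_pi]
    simp

theorem integral_coeffIntegrand (Q : ℤ[X]) (k : ℕ) :
    ∫ θ in (0 : ℝ)..π / 2, coeffIntegrand Q k θ = π / 2 * Q.coeff k := by
  simp only [coeffIntegrand_eq_sum]
  rw [intervalIntegral.integral_finsetSum
    fun j _ ↦ Continuous.intervalIntegrable (by fun_prop) _ _]
  simp only [intervalIntegral.integral_const_mul, integral_cos_two_mul_int_mul, sub_eq_zero,
    Nat.cast_inj, mul_ite, mul_zero, Finset.sum_ite_eq', mem_support_iff, ite_not]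
  split_ifs with hk
  · simp [hk]
  · exact mul_comm _ _

end CoeffIntegral

section SineProduct

open Complex (I)
open Finset Polynomial Real

/-- The product `∏_{1 ≤ j ≤ n} sin (j θ)`, which is `(q; q)_n` at `q = e^{2iθ}` up to
a factor of modulus `2 ^ n`. -/
noncomputable def sinProd (n : ℕ) (θ : ℝ) : ℝ := ∏ i ∈ range n, sin ((i + 1 : ℕ) * θ)

/-- The ratio `∏_{1 ≤ j ≤ n} sin ((n + j) θ) / sin (j θ)`, which is the Gaussian binomial
coefficient `binom(2n, n)_q` at `q = e^{2iθ}` up to a unimodular factor. -/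
noncomputable def sinRatio (n : ℕ) (θ : ℝ) : ℝ :=
  ∏ i ∈ range n, sin ((n + i + 1 : ℕ) * θ) / sin ((i + 1 : ℕ) * θ)

theorem sinRatio_mul_sq_sinProd {n : ℕ} {θ : ℝ} (h : sinProd n θ ≠ 0) :
    sinRatio n θ * sinProd n θ ^ 2 = sinProd (n + n) θ := by
  rw [sinProd.eq_1 (n + n), prod_range_add, ← sinProd, sinRatio, prod_div_distrib, ← sinProd]
  simp only [add_assoc]
  rw [div_mul_eq_mul_div, div_eq_iff h]
  ring

theorem one_sub_exp_two_mul_mul_I (z : ℂ) :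
    1 - Complex.exp (2 * z * I) = -2 * I * Complex.exp (z * I) * Complex.sin z := by
  have hinv : Complex.exp (z * I) * Complex.exp (-z * I) = 1 := by
    rw [← Complex.exp_add, neg_mul, add_neg_cancel, Complex.exp_zero]
  have hsq : Complex.exp (2 * z * I) = Complex.exp (z * I) ^ 2 := by
    rw [← Complex.exp_nat_mul, Nat.cast_ofNat, mul_assoc]
  linear_combination (I * Complex.exp (z * I)) * Complex.two_sin z - hsq - hinv +
    (Complex.exp (z * I) * Complex.exp (-z * I) - Complex.exp (z * I) ^ 2) * Complex.I_sq

theorem add_succ_choose_two (l m : ℕ) :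
    (l + m + 1).choose 2 = (l + 1).choose 2 + (m + 1).choose 2 + l * m := by
  induction m with
  | zero => simp
  | succ m ih =>
    rw [← add_assoc, Nat.choose_succ_succ' _ 1, Nat.choose_succ_succ' (m + 1) 1, ih]
    simp only [Nat.choose_one_right]
    ring

theorem aeval_qPochhammer (n : ℕ) (θ : ℝ) :
    aeval (Complex.exp (2 * θ * I)) (qPochhammer n) =
      (-2 * I) ^ n * Complex.exp (θ * I) ^ (n + 1).choose 2 * sinProd n θ := by
  induction n with
  | zero => simp [qPochhammer, sinProd]
  | succ n ih =>
    have hfactor : 1 - Complex.exp (2 * θ * I) ^ (n + 1) =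
        -2 * I * Complex.exp (θ * I) ^ (n + 1) * (sin ((n + 1 : ℕ) * θ) : ℝ) := by
      have h := one_sub_exp_two_mul_mul_I ((n + 1 : ℕ) * θ)
      rw [← Complex.exp_nat_mul, ← Complex.exp_nat_mul]
      push_cast at h ⊢
      convert h using 3 <;> ring_nf
    rw [qPochhammer_succ, map_mul, ih, map_sub, map_one, map_pow, aeval_X, hfactor, sinProd,
      sinProd, prod_range_succ, Nat.choose_succ_succ' (n + 1) 1, Nat.choose_one_right]
    push_cast
    ring

theorem aeval_gaussBinom_mul_sinProd (l m : ℕ) (θ : ℝ) :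
    aeval (Complex.exp (2 * θ * I)) (gaussBinom l m) * (sinProd l θ * sinProd m θ) =
      Complex.exp (θ * I) ^ (l * m) * sinProd (l + m) θ := by
  have h := congrArg (aeval (Complex.exp (2 * θ * I))) (gaussBinom_mul_qPochhammer l m)
  simp only [map_mul, aeval_qPochhammer] at h
  have hne : (-2 * I) ^ (l + m) *
      Complex.exp (θ * I) ^ ((l + 1).choose 2 + (m + 1).choose 2) ≠ 0 := by
    simp [Complex.exp_ne_zero]
  refine mul_left_cancel₀ hne ?_
  rw [add_succ_choose_two] at h
  linear_combination h

theorem aeval_gaussBinom_self {n : ℕ} {θ : ℝ} (h : sinProd n θ ≠ 0) :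
    aeval (Complex.exp (2 * θ * I)) (gaussBinom n n) =
      Complex.exp (θ * I) ^ (n * n) * sinRatio n θ := by
  have hne : (sinProd n θ * sinProd n θ : ℂ) ≠ 0 := by exact_mod_cast mul_ne_zero h h
  refine mul_right_cancel₀ hne ?_
  rw [aeval_gaussBinom_mul_sinProd, ← sinRatio_mul_sq_sinProd h]
  push_cast
  ring

theorem coeffIntegrand_one_sub_X_mul_gaussBinom_self {n k : ℕ} {θ : ℝ} (h : sinProd n θ ≠ 0) :
    coeffIntegrand ((1 - X) * gaussBinom n n) k θ =
      2 * sinRatio n θ * sin θ * sin ((n ^ 2 + 1 - 2 * k) * θ) := by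
  have hexp : Complex.exp (((n ^ 2 + 1 - 2 * k) * θ : ℝ) * I) =
      Complex.exp (θ * I) * Complex.exp (θ * I) ^ (n * n) * Complex.exp (-(2 * k * θ * I)) := by
    rw [← Complex.exp_nat_mul, ← Complex.exp_add, ← Complex.exp_add]
    push_cast
    ring_nf
  have hval : aeval (Complex.exp (2 * θ * I)) ((1 - X) * gaussBinom n n) *
      Complex.exp (-(2 * k * θ * I)) = (2 * sinRatio n θ * sin θ : ℝ) *
        (-I * Complex.exp (((n ^ 2 + 1 - 2 * k) * θ : ℝ) * I)) := by
    rw [map_mul, map_sub, map_one, aeval_X, one_sub_exp_two_mul_mul_I, aeval_gaussBinom_self h,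
      hexp]
    push_cast
    ring
  rw [coeffIntegrand, hval, Complex.re_ofReal_mul, neg_mul, Complex.neg_re, Complex.I_mul_re,
    Complex.exp_ofReal_mul_I_im, neg_neg]

end SineProduct

section LargeSquares

open Complex (I)
open Finset Polynomial Real

/-- The integrand whose mean over `[0, π/2]` is `coeffGap n n k`. -/
noncomputable def gapIntegrand (n k : ℕ) : ℝ → ℝ := coeffIntegrand ((1 - X) * gaussBinom n n) k

variable {n k : ℕ} {θ : ℝ}

theorem norm_exp_two_mul_mul_I (θ : ℝ) : ‖Complex.exp (2 * θ * I)‖ = 1 := by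
  exact_mod_cast Complex.norm_exp_ofReal_mul_I (2 * θ)

theorem neg_two_mul_three_pow_le_gapIntegrand (hθ : π ≤ 2 * n * θ) (hθ' : θ ≤ π / 2) :
    -(2 * 3 ^ n) ≤ gapIntegrand n k θ := by
  have hθ₀ : 0 ≤ θ := (pos_of_mul_pos_right (pi_pos.trans_le hθ) (by positivity)).le
  have hsub : 2 ≤ n * ‖Complex.exp (2 * θ * I) - 1‖ := by
    have hnorm : ‖Complex.exp (2 * θ * I) - 1‖ = |2 * sin θ| := by
      have h := Complex.norm_exp_I_mul_ofReal_sub_one (2 * θ)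
      rwa [mul_div_cancel_left₀ _ two_ne_zero, mul_comm I, Complex.ofReal_mul] at h
    rw [hnorm]
    calc (2 : ℝ) ≤ n * (2 * (2 / π * θ)) := by
          field_simp
          linarith
      _ ≤ n * (2 * sin θ) := by gcongr; exact mul_le_sin hθ₀ hθ'
      _ ≤ n * |2 * sin θ| := by gcongr; exact le_abs_self _
  refine (abs_le.1 ((Complex.abs_re_le_norm _).trans ?_)).1
  have hphase : ‖Complex.exp (-(2 * k * θ * I))‖ = 1 := by
    simp [Complex.norm_exp]
  have hone : ‖1 - Complex.exp (2 * θ * I)‖ ≤ 2 := by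
    refine (norm_sub_le _ _).trans_eq ?_
    rw [norm_exp_two_mul_mul_I, norm_one, one_add_one_eq_two]
  rw [norm_mul, hphase, mul_one, map_mul, norm_mul, map_sub, map_one, aeval_X]
  gcongr
  exact norm_aeval_gaussBinom_self_le (norm_exp_two_mul_mul_I θ) hsub

theorem sin_nat_mul_nonneg {j : ℕ} (hj : j ≤ 2 * n) (hθ : 0 ≤ θ) (hθ' : 2 * n * θ ≤ π) :
    0 ≤ sin (j * θ) := by
  have hj' : (j : ℝ) ≤ 2 * n := by exact_mod_cast hj
  exact sin_nonneg_of_nonneg_of_le_pi (by positivity)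
    ((mul_le_mul_of_nonneg_right hj' hθ).trans hθ')

theorem sin_nat_mul_pos {j : ℕ} (hj : 0 < j) (hj' : j < 2 * n) (hθ : 0 < θ) (hθ' : 2 * n * θ ≤ π) :
    0 < sin (j * θ) := by
  have hj'' : (j : ℝ) < 2 * n := by exact_mod_cast hj'
  exact sin_pos_of_pos_of_lt_pi (by positivity)
    ((mul_lt_mul_of_pos_right hj'' hθ).trans_le hθ')

theorem sinRatio_nonneg (hθ : 0 < θ) (hθ' : 2 * n * θ ≤ π) : 0 ≤ sinRatio n θ :=
  prod_nonneg fun i hi ↦ by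
    have hi' := mem_range.1 hi
    exact div_nonneg (sin_nat_mul_nonneg (by lia) hθ.le hθ')
      (sin_nat_mul_nonneg (by lia) hθ.le hθ')

theorem gapIntegrand_eq (hθ : 0 < θ) (hθ' : 2 * n * θ ≤ π) :
    gapIntegrand n k θ = 2 * sinRatio n θ * sin θ * sin ((n ^ 2 + 1 - 2 * k) * θ) :=
  coeffIntegrand_one_sub_X_mul_gaussBinom_self <| prod_ne_zero_iff.2 fun i hi ↦ by
    have hi' := mem_range.1 hi
    exact (sin_nat_mul_pos (by lia) (by lia) hθ hθ').ne'

theorem gapIntegrand_nonneg (hk : 2 * k ≤ n ^ 2) (hk' : n ^ 2 + 2 ≤ 2 * k + 2 * n) (hθ : 0 < θ)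
    (hθ' : 2 * n * θ ≤ π) : 0 ≤ gapIntegrand n k θ := by
  have hfreq : (n ^ 2 + 1 - 2 * k : ℝ) = (n ^ 2 + 1 - 2 * k : ℕ) := by
    rw [Nat.cast_sub (by lia)]
    push_cast
    ring
  have hsin : 0 ≤ sin θ := by
    simpa using sin_nat_mul_nonneg (j := 1) (n := n) (by nlinarith) hθ.le hθ'
  have hsin' := sin_nat_mul_nonneg (j := n ^ 2 + 1 - 2 * k) (by lia) hθ.le hθ'
  have hratio := sinRatio_nonneg hθ hθ'
  rw [gapIntegrand_eq hθ hθ', hfreq]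
  positivity

theorem prod_range_add_div_eq_centralBinom (n : ℕ) :
    ∏ i ∈ range n, ((n + i + 1 : ℕ) : ℝ) / (i + 1 : ℕ) = n.centralBinom := by
  have h := Nat.ascFactorial_eq_prod_range (n + 1) n
  rw [Nat.ascFactorial_eq_factorial_mul_choose, ← two_mul, ← Nat.centralBinom] at h
  simp only [add_right_comm n 1] at h
  rw [prod_div_distrib, ← Nat.cast_prod, ← Nat.cast_prod, prod_range_add_one_eq_factorial, ← h,
    Nat.cast_mul, mul_div_cancel_left₀ _ (Nat.cast_ne_zero.2 n.factorial_ne_zero)]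

theorem div_mul_one_sub_sq_le_sin_div_sin {x y : ℝ} (hx : 0 < x) (hsin : 0 < sin x) (hy : 0 < y)
    (hy' : y ^ 2 ≤ 6) : y / x * (1 - y ^ 2 / 6) ≤ sin y / sin x := by
  have hcube : y * (1 - y ^ 2 / 6) ≤ sin y := by linarith [sin_gt_sub_cube hy]
  have hnonneg : 0 ≤ y * (1 - y ^ 2 / 6) := mul_nonneg hy.le (by linarith)
  rw [div_mul_eq_mul_div]
  exact div_le_div₀ (hnonneg.trans hcube) hcube hsin (sin_lt hx).le

theorem mul_one_sub_sq_le_sin_div_sin {i : ℕ} (hi : i < n) (hθ : 0 < θ) (hθ' : n * θ ≤ 1 / 2) :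
    ((n + i + 1 : ℕ) : ℝ) / (i + 1 : ℕ) * (1 - (n * θ) ^ 2) ≤
      sin ((n + i + 1 : ℕ) * θ) / sin ((i + 1 : ℕ) * θ) := by
  have hle : ((n + i + 1 : ℕ) : ℝ) * θ ≤ 2 * (n * θ) := by
    rw [← mul_assoc]
    gcongr
    exact_mod_cast (by lia : n + i + 1 ≤ 2 * n)
  have hsq : (((n + i + 1 : ℕ) : ℝ) * θ) ^ 2 ≤ 4 * (n * θ) ^ 2 := by
    refine (pow_le_pow_left₀ (by positivity) hle 2).trans_eq ?_
    ring
  have hsq' : (n * θ) ^ 2 ≤ (1 / 2) ^ 2 := pow_le_pow_left₀ (by positivity) hθ' 2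
  have hsin : 0 < sin ((i + 1 : ℕ) * θ) :=
    sin_nat_mul_pos (n := n) (by lia) (by lia) hθ (by linarith [pi_gt_three])
  calc ((n + i + 1 : ℕ) : ℝ) / (i + 1 : ℕ) * (1 - (n * θ) ^ 2)
      ≤ ((n + i + 1 : ℕ) * θ) / ((i + 1 : ℕ) * θ) * (1 - ((n + i + 1 : ℕ) * θ) ^ 2 / 6) := by
        rw [mul_div_mul_right _ _ hθ.ne']
        gcongr
        linarith [sq_nonneg (n * θ)]
    _ ≤ sin ((n + i + 1 : ℕ) * θ) / sin ((i + 1 : ℕ) * θ) :=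
        div_mul_one_sub_sq_le_sin_div_sin (by positivity) hsin (by positivity) (by linarith)

theorem nat_mul_le_half (hn : 2 ≤ n) (hθ : n ^ 2 * θ ≤ 1) : n * θ ≤ 1 / 2 := by
  have hn' : (2 : ℝ) ≤ n := by exact_mod_cast hn
  by_contra! h
  nlinarith

theorem centralBinom_div_two_le_sinRatio (hn : 2 ≤ n) (hθ : 0 < θ) (hθ' : n ^ 2 * θ ≤ 1) :
    (n.centralBinom : ℝ) / 2 ≤ sinRatio n θ := by
  have hnθ := nat_mul_le_half hn hθ'
  have hnθ₀ : 0 ≤ n * θ := by positivity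
  have hsq : (n * θ) ^ 2 ≤ 1 := by nlinarith
  have hbernoulli : 1 / 2 ≤ (1 - (n * θ) ^ 2) ^ n := by
    have h := one_add_mul_le_pow (a := -(n * θ) ^ 2) (by linarith) n
    have hmul : (n ^ 2 * θ) * (n * θ) ≤ 1 * (1 / 2) := by gcongr
    rw [← sub_eq_add_neg] at h
    linarith
  calc (n.centralBinom : ℝ) / 2
      ≤ n.centralBinom * (1 - (n * θ) ^ 2) ^ n := by
        rw [div_eq_mul_one_div]
        gcongr
    _ = ∏ i ∈ range n, ((n + i + 1 : ℕ) : ℝ) / (i + 1 : ℕ) * (1 - (n * θ) ^ 2) := by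
        rw [prod_mul_distrib, prod_range_add_div_eq_centralBinom, prod_const, card_range]
    _ ≤ sinRatio n θ := by
        refine prod_le_prod (fun i _ ↦ mul_nonneg (by positivity) (by linarith)) fun i hi ↦ ?_
        exact mul_one_sub_sq_le_sin_div_sin (mem_range.1 hi) hθ hnθ

theorem centralBinom_mul_le_gapIntegrand (hn : 2 ≤ n) (hk : 2 * k ≤ n ^ 2)
    (hk' : n ^ 2 + 2 ≤ 2 * k + 2 * n) (hθ : 1 ≤ 2 * n ^ 2 * θ) (hθ' : n ^ 2 * θ ≤ 1) :
    n.centralBinom * (1 / (π * n ^ 2)) ^ 2 ≤ gapIntegrand n k θ := by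
  have hθ₀ : 0 < θ := pos_of_mul_pos_right (one_pos.trans_le hθ) (by positivity)
  have hnθ := nat_mul_le_half hn hθ'
  have hkR : 2 * (k : ℝ) ≤ n ^ 2 := by exact_mod_cast hk
  have hkR' : (n : ℝ) ^ 2 + 2 ≤ 2 * k + 2 * n := by exact_mod_cast hk'
  have hlo : θ ≤ (n ^ 2 + 1 - 2 * k) * θ := le_mul_of_one_le_left hθ₀.le (by linarith)
  have hhi : (n ^ 2 + 1 - 2 * k) * θ ≤ π / 2 := by
    calc (n ^ 2 + 1 - 2 * k) * θ ≤ (2 * n) * θ := by gcongr; linarith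
      _ ≤ π / 2 := by linarith [pi_gt_three]
  have hsin : 1 / (π * n ^ 2) ≤ sin θ := by
    refine le_trans ?_ (mul_le_sin hθ₀.le (hlo.trans hhi))
    field_simp
    linarith
  have hsin' : sin θ ≤ sin ((n ^ 2 + 1 - 2 * k) * θ) :=
    sin_le_sin_of_le_of_le_pi_div_two (by linarith [pi_pos]) hhi hlo
  have hratio := centralBinom_div_two_le_sinRatio hn hθ₀ hθ'
  rw [gapIntegrand_eq hθ₀ (by linarith [pi_gt_three])]
  calc (n.centralBinom : ℝ) * (1 / (π * n ^ 2)) ^ 2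
      = 2 * (n.centralBinom / 2) * (1 / (π * n ^ 2)) * (1 / (π * n ^ 2)) := by ring
    _ ≤ 2 * sinRatio n θ * sin θ * sin ((n ^ 2 + 1 - 2 * k) * θ) := by
        have hsin₀ : 0 ≤ sin θ := le_trans (by positivity) hsin
        have hratio₀ : 0 ≤ sinRatio n θ := le_trans (by positivity) hratio
        gcongr
        exact hsin.trans hsin'

theorem sub_mul_le_integral_of_le {f : ℝ → ℝ} {a b c : ℝ}
    (hf : IntervalIntegrable f MeasureTheory.volume a b) (hab : a ≤ b)
    (h : ∀ x ∈ Set.Ioo a b, c ≤ f x) : (b - a) * c ≤ ∫ x in a..b, f x := by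
  simpa using intervalIntegral.integral_mono_on_of_le_Ioo (μ := MeasureTheory.volume) hab
    (continuous_const.intervalIntegrable a b) hf h

theorem centralBinom_mul_sub_le_integral_gapIntegrand (hn : 2 ≤ n) (hk : 2 * k ≤ n ^ 2)
    (hk' : n ^ 2 + 2 ≤ 2 * k + 2 * n) :
    1 / (2 * n ^ 2) * (n.centralBinom * (1 / (π * n ^ 2)) ^ 2) - π / 2 * (2 * 3 ^ n) ≤
      ∫ θ in (0 : ℝ)..π / 2, gapIntegrand n k θ := by
  have hn₂ : (2 : ℝ) ≤ n := by exact_mod_cast hn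
  have hint (x y : ℝ) : IntervalIntegrable (gapIntegrand n k) MeasureTheory.volume x y :=
    (continuous_coeffIntegrand _ k).intervalIntegrable x y
  set a : ℝ := 1 / (2 * n ^ 2) with ha
  set b : ℝ := 1 / n ^ 2 with hb
  set c : ℝ := π / (2 * n) with hc
  have ha₀ : 0 < a := by positivity
  have hba : b - a = a := by rw [ha, hb]; field_simp; norm_num
  have hbc : b ≤ c := by
    rw [hb, hc, div_le_div_iff₀ (by positivity) (by positivity)]
    nlinarith [pi_gt_three]
  have hc₀ : c ≤ π / 2 := div_le_div_of_nonneg_left pi_pos.le two_pos (by linarith)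
  have hnonneg {x y : ℝ} (hx : 0 ≤ x) (hxy : x ≤ y) (hy : y ≤ c) :
      0 ≤ ∫ θ in x..y, gapIntegrand n k θ :=
    by simpa using sub_mul_le_integral_of_le (c := 0) (hint _ _) hxy fun θ hθ ↦
      gapIntegrand_nonneg hk hk' (hx.trans_lt hθ.1)
        ((le_div_iff₀' (by positivity)).1 (hθ.2.le.trans hy))
  have hpeak : a * (n.centralBinom * (1 / (π * n ^ 2)) ^ 2) ≤ ∫ θ in a..b, gapIntegrand n k θ := by
    have h := sub_mul_le_integral_of_le (hint _ _) (by linarith : a ≤ b) fun θ hθ ↦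
      centralBinom_mul_le_gapIntegrand hn hk hk'
        ((div_le_iff₀' (by positivity)).1 hθ.1.le) ((le_div_iff₀' (by positivity)).1 hθ.2.le)
    rwa [hba] at h
  have htail : π / 2 * -(2 * 3 ^ n) ≤ ∫ θ in c..π / 2, gapIntegrand n k θ := by
    refine le_trans ?_ <| sub_mul_le_integral_of_le (hint _ _) hc₀ fun θ hθ ↦
      neg_two_mul_three_pow_le_gapIntegrand ((div_le_iff₀' (by positivity)).1 hθ.1.le) hθ.2.le
    refine mul_le_mul_of_nonpos_right ?_ (by simp)
    linarith
  have hsplit := intervalIntegral.integral_add_adjacent_intervals (hint 0 a) (hint a (π / 2))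
  rw [← intervalIntegral.integral_add_adjacent_intervals (hint a b) (hint b (π / 2)),
    ← intervalIntegral.integral_add_adjacent_intervals (hint b c) (hint c (π / 2))] at hsplit
  linarith [hnonneg le_rfl ha₀.le (by linarith), hnonneg (by linarith) hbc le_rfl]

theorem centralBinom_div_sub_le_coeffGap_self (hn : 2 ≤ n) (hk : 2 * k ≤ n ^ 2)
    (hk' : n ^ 2 + 2 ≤ 2 * k + 2 * n) :
    n.centralBinom / (32 * n ^ 6) - 2 * 3 ^ n ≤ (coeffGap n n k : ℝ) := by
  have : (0 : ℝ) < n := by exact_mod_cast (by lia : 0 < n)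
  have hpi : π ^ 3 ≤ 32 := by
    calc π ^ 3 ≤ 3.15 ^ 3 := by
          gcongr
          exact pi_lt_d2.le
      _ ≤ 32 := by norm_num
  have hint := centralBinom_mul_sub_le_integral_gapIntegrand hn hk hk'
  rw [gapIntegrand, integral_coeffIntegrand, ← coeffGap] at hint
  have hscale : 1 / (2 * n ^ 2) * (n.centralBinom * (1 / (π * n ^ 2)) ^ 2) - π / 2 * (2 * 3 ^ n) =
      π / 2 * (n.centralBinom / (π ^ 3 * n ^ 6) - 2 * 3 ^ n) := by
    field_simp
  rw [hscale] at hint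
  refine le_trans ?_ (le_of_mul_le_mul_left hint (by positivity))
  gcongr

theorem mul_pow_seven_mul_three_pow_le_four_pow (hn : 140 ≤ n) : 192 * n ^ 7 * 3 ^ n ≤ 4 ^ n := by
  induction n, hn using Nat.le_induction with
  | base => norm_num
  | succ n hn ih =>
    have hstep : 3 * (n + 1) ^ 7 ≤ 4 * n ^ 7 := by
      have h : (140 * (n + 1)) ^ 7 ≤ (141 * n) ^ 7 := Nat.pow_le_pow_left (by lia) 7
      rw [mul_pow, mul_pow] at h
      norm_num at h
      lia
    calc 192 * (n + 1) ^ 7 * 3 ^ (n + 1) = 192 * (3 * (n + 1) ^ 7) * 3 ^ n := by ring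
      _ ≤ 192 * (4 * n ^ 7) * 3 ^ n := by gcongr
      _ = 4 * (192 * n ^ 7 * 3 ^ n) := by ring
      _ ≤ 4 * 4 ^ n := by gcongr
      _ = 4 ^ (n + 1) := (pow_succ' 4 n).symm

theorem two_pow_le_coeffGap_self (hn : 140 ≤ n) (hk : 2 * k ≤ n ^ 2)
    (hk' : n ^ 2 + 2 ≤ 2 * k + 2 * n) : 2 ^ n ≤ coeffGap n n k := by
  have : (0 : ℝ) < n := by exact_mod_cast (by lia : 0 < n)
  have hgrowth : 192 * (n : ℝ) ^ 7 * 3 ^ n ≤ 2 * n * n.centralBinom := by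
    exact_mod_cast (mul_pow_seven_mul_three_pow_le_four_pow hn).trans
      (Nat.four_pow_le_two_mul_self_mul_centralBinom n (by lia))
  have hbinom : 3 * (3 : ℝ) ^ n ≤ n.centralBinom / (32 * n ^ 6) := by
    rw [le_div_iff₀ (by positivity)]
    refine le_of_mul_le_mul_left (a := 2 * (n : ℝ)) ?_ (by positivity)
    linear_combination hgrowth
  have hpow : (2 : ℝ) ^ n ≤ 3 ^ n := by gcongr; norm_num
  have hgap := centralBinom_div_sub_le_coeffGap_self (by lia) hk hk'
  have hreal : (2 : ℝ) ^ n ≤ coeffGap n n k := by linarith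
  exact_mod_cast hreal

end LargeSquares

section KroneckerSubstitution

open Polynomial

theorem eval_ediv_pow_emod {P : ℤ[X]} {b : ℤ} (hP : ∀ i, 0 ≤ P.coeff i) (hPb : ∀ i, P.coeff i < b)
    (k : ℕ) : P.eval b / b ^ k % b = P.coeff k := by
  have hb : 0 < b := (hP 0).trans_lt (hPb 0)
  have hdivX : P.eval b = b * P.divX.eval b + P.coeff 0 := by
    nth_rw 1 [← divX_mul_X_add P]
    simp [mul_comm]
  induction k generalizing P with
  | zero =>
    rw [pow_zero, Int.ediv_one, hdivX, Int.mul_add_emod_self_left,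
      Int.emod_eq_of_lt (hP 0) (hPb 0)]
  | succ k ih =>
    have hdiv : P.eval b / b = P.divX.eval b := by
      rw [hdivX, Int.mul_add_ediv_left _ _ hb.ne', Int.ediv_eq_zero_of_lt (hP 0) (hPb 0), add_zero]
    rw [pow_succ', ← Int.ediv_ediv_of_nonneg hb.le, hdiv, ← coeff_divX]
    refine ih (fun i ↦ ?_) (fun i ↦ ?_) ?_
    · exact (hP (i + 1)).trans_eq (coeff_divX ..).symm
    · exact (coeff_divX ..).trans_lt (hPb (i + 1))
    · nth_rw 1 [← divX_mul_X_add P.divX]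
      simp [mul_comm]

/-- The point at which Gaussian binomial coefficients are evaluated. It exceeds the coefficients of
`gaussBinom m m` for `m < 140`, which are therefore the base-`kroneckerBase` digits of the value. -/
def kroneckerBase : ℕ := 2 ^ 280

theorem one_lt_kroneckerBase_pow (m : ℕ) : 1 < kroneckerBase ^ (m + 1) :=
  one_lt_pow₀ (by norm_num [kroneckerBase]) m.succ_ne_zero

theorem digit_eq_coeff_gaussBinom {m N : ℕ} (hm : m < 140)
    (hN : (N : ℤ) = (gaussBinom m m).eval (kroneckerBase : ℤ)) (k : ℕ) :
    ((N / kroneckerBase ^ k % kroneckerBase : ℕ) : ℤ) = (gaussBinom m m).coeff k := by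
  have hlt (i : ℕ) : (gaussBinom m m).coeff i < (kroneckerBase : ℤ) := by
    refine (coeff_gaussBinom_le_two_pow m m i).trans_lt ?_
    rw [kroneckerBase, Nat.cast_pow, Nat.cast_ofNat]
    exact pow_lt_pow_right₀ one_lt_two (by lia)
  push_cast
  rw [hN]
  exact eval_ediv_pow_emod (coeff_gaussBinom_nonneg m m) hlt k

/-- Sends the value of `gaussBinom m m` at `kroneckerBase` to that of
`gaussBinom (m + 1) (m + 1)`. -/
def kroneckerStep (m N : ℕ) : ℕ :=
  N * (kroneckerBase ^ (2 * m + 1) - 1) * (kroneckerBase ^ (2 * m + 2) - 1) /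
    (kroneckerBase ^ (m + 1) - 1) ^ 2

theorem kroneckerStep_eq_eval {m N : ℕ}
    (hN : (N : ℤ) = (gaussBinom m m).eval (kroneckerBase : ℤ)) :
    (kroneckerStep m N : ℤ) = (gaussBinom (m + 1) (m + 1)).eval (kroneckerBase : ℤ) := by
  have hrec := congrArg (eval (kroneckerBase : ℤ)) (gaussBinom_succ_self_mul m)
  simp only [eval_mul, eval_pow, eval_sub, eval_one, eval_X] at hrec
  have hcast (j : ℕ) :
      ((kroneckerBase ^ (j + 1) - 1 : ℕ) : ℤ) = (kroneckerBase : ℤ) ^ (j + 1) - 1 := by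
    rw [Nat.cast_sub (one_lt_kroneckerBase_pow j).le, Nat.cast_pow, Nat.cast_one]
  have hpos : 0 < (kroneckerBase : ℤ) ^ (m + 1) - 1 := by
    rw [sub_pos]
    exact_mod_cast one_lt_kroneckerBase_pow m
  rw [kroneckerStep, Int.natCast_ediv, Nat.cast_mul, Nat.cast_mul, Nat.cast_pow, hcast, hcast,
    hcast, hN]
  exact Int.ediv_eq_of_eq_mul_left (by positivity) (by linear_combination -hrec)

/-- `f n`, with `f` applied by cases on `n`: the kernel must first reduce `n` to a literal, so that
a costly `n` is computed once rather than at each of its occurrences in `f n`. -/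
def force {α : Type} (n : ℕ) (f : ℕ → α) : α := Nat.rec (f 0) (fun m _ ↦ f (m + 1)) n

theorem force_eq {α : Type} (n : ℕ) (f : ℕ → α) : force n f = f n := by
  cases n <;> rfl

/-- Checks that each of the `r + 1` lowest digits of `N` but the first exceeds the preceding one by
at least `c`. -/
def digitsGrowBy (c : ℕ) : ℕ → ℕ → Bool
  | 0, _ => true
  | r + 1, N => force (N / kroneckerBase) fun N' ↦
      Nat.ble (N % kroneckerBase + c) (N' % kroneckerBase) && digitsGrowBy c r N'

theorem digit_add_le_of_digitsGrowBy {c r N i : ℕ} (h : digitsGrowBy c r N = true) (hi : i < r) :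
    N / kroneckerBase ^ i % kroneckerBase + c ≤
      N / kroneckerBase ^ (i + 1) % kroneckerBase := by
  induction r generalizing N i with
  | zero => exact absurd hi i.not_lt_zero
  | succ r ih =>
    rw [digitsGrowBy, force_eq, Bool.and_eq_true, Nat.ble_eq] at h
    rcases i with _ | i
    · simpa using h.1
    · simpa only [Nat.div_div_eq_div_mul, ← pow_succ'] using ih h.2 (Nat.lt_of_succ_lt_succ hi)

/-- The least `c` with `2 ^ m < 5 * (m - 1) ^ 4 * c`. -/
def gapBound (m : ℕ) : ℕ := 2 ^ m / (5 * (m - 1) ^ 4) + 1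

/-- The least `k` for which the gap at `k` is checked on the `m × m` square: smaller ones are
covered by smaller squares, the `8 × 8` square serving for all `2 ≤ k ≤ 32`. -/
def windowStart (m : ℕ) : ℕ := if m ≤ 8 then 2 else (m - 1) ^ 2 / 2 + 1

/-- Checks `gapBound m ≤ coeffGap m m k` for `windowStart m ≤ k ≤ m ^ 2 / 2`, where `N` is the value
of `gaussBinom m m` at `kroneckerBase`. -/
def checkSquare (m N : ℕ) : Bool :=
  force (N / kroneckerBase ^ (windowStart m - 1)) fun W ↦
    digitsGrowBy (gapBound m) (m ^ 2 / 2 + 1 - windowStart m) W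

theorem windowStart_pos (m : ℕ) : 0 < windowStart m := by
  rw [windowStart]
  split_ifs <;> lia

theorem gapBound_le_of_checkSquare {m N k : ℕ} (h : checkSquare m N = true) (hm : m < 140)
    (hN : (N : ℤ) = (gaussBinom m m).eval (kroneckerBase : ℤ)) (hk : windowStart m ≤ k)
    (hk' : 2 * k ≤ m ^ 2) : (gapBound m : ℤ) ≤ coeffGap m m k := by
  have hstart := windowStart_pos m
  obtain ⟨j, rfl⟩ : ∃ j, k = j + 1 := ⟨k - 1, by lia⟩
  rw [checkSquare, force_eq] at h
  have hdigit := digit_add_le_of_digitsGrowBy h (i := j + 1 - windowStart m) (by lia)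
  rw [Nat.div_div_eq_div_mul, Nat.div_div_eq_div_mul, ← pow_add, ← pow_add,
    show windowStart m - 1 + (j + 1 - windowStart m) = j by lia,
    show windowStart m - 1 + (j + 1 - windowStart m + 1) = j + 1 by lia] at hdigit
  zify at hdigit
  have hj := digit_eq_coeff_gaussBinom hm hN j
  have hj' := digit_eq_coeff_gaussBinom hm hN (j + 1)
  push_cast at hj hj'
  rw [hj, hj', coeff_gaussBinom, coeff_gaussBinom] at hdigit
  rw [coeffGap_succ]
  linarith

/-- Runs `checkSquare` on the squares of sides `m, m + 1, …, m + r - 1` other than those of side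
less than `8`, where `N` is the value of `gaussBinom m m` at `kroneckerBase`. -/
def checkSquares : ℕ → ℕ → ℕ → Bool
  | 0, _, _ => true
  | r + 1, m, N => force N fun N' ↦
      (Nat.blt m 8 || checkSquare m N') && checkSquares r (m + 1) (kroneckerStep m N')

theorem exists_checkSquare_of_checkSquares {r m N j : ℕ} (h : checkSquares r m N = true)
    (hN : (N : ℤ) = (gaussBinom m m).eval (kroneckerBase : ℤ)) (hj₈ : 8 ≤ j) (hj : m ≤ j)
    (hj' : j < m + r) :
    ∃ N' : ℕ, (N' : ℤ) = (gaussBinom j j).eval (kroneckerBase : ℤ) ∧ checkSquare j N' = true := by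
  induction r generalizing m N with
  | zero => lia
  | succ r ih =>
    rw [checkSquares, force_eq, Bool.and_eq_true, Bool.or_eq_true, Nat.blt_eq] at h
    rcases hj.eq_or_lt with rfl | hlt
    · exact ⟨N, hN, h.1.resolve_left hj₈.not_gt⟩
    · exact ih h.2 (kroneckerStep_eq_eval hN) hlt (by lia)

theorem checkSquares_eq_true : checkSquares 140 0 1 = true := by
  decide +kernel

theorem gapBound_le_coeffGap_self {m k : ℕ} (hm : 8 ≤ m) (hm' : m < 140) (hk : windowStart m ≤ k)
    (hk' : 2 * k ≤ m ^ 2) : (gapBound m : ℤ) ≤ coeffGap m m k := by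
  obtain ⟨N, hN, hcheck⟩ := exists_checkSquare_of_checkSquares checkSquares_eq_true
    (by simp [gaussBinom_zero_left]) hm m.zero_le (by lia)
  exact gapBound_le_of_checkSquare hcheck hm' hN hk hk'

end KroneckerSubstitution

section AllSquares

open Real

theorem coeffGap_eight_pos {k : ℕ} (hk : 2 ≤ k) (hk' : k ≤ 32) : 0 < coeffGap 8 8 k :=
  gapBound_le_coeffGap_self (m := 8) le_rfl (by norm_num) hk (by lia)

theorem two_pow_le_mul_coeffGap_succ_self {m k : ℕ} (hm : 8 ≤ m) (hk : m ^ 2 < 2 * k)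
    (hk' : 2 * k ≤ (m + 1) ^ 2) :
    (2 : ℤ) ^ (m + 1) ≤ 5 * (2 * k) ^ 2 * coeffGap (m + 1) (m + 1) k := by
  rcases lt_or_ge (m + 1) 140 with hlt | hge
  · have hstart : windowStart (m + 1) ≤ k := by
      rw [windowStart, if_neg (by lia), Nat.add_sub_cancel]
      lia
    have hbound : 2 ^ (m + 1) ≤ 5 * m ^ 4 * gapBound (m + 1) :=
      (Nat.lt_mul_div_succ (2 ^ (m + 1)) (by positivity : 0 < 5 * m ^ 4)).le
    calc (2 : ℤ) ^ (m + 1) ≤ 5 * m ^ 4 * gapBound (m + 1) := by exact_mod_cast hbound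
      _ = 5 * (m ^ 2) ^ 2 * gapBound (m + 1) := by rw [← pow_mul]
      _ ≤ 5 * (2 * k) ^ 2 * coeffGap (m + 1) (m + 1) k := by
        gcongr
        · exact_mod_cast hk.le
        · exact gapBound_le_coeffGap_self (by lia) hlt hstart hk'
  · have hgap := two_pow_le_coeffGap_self hge hk' (by lia)
    have hk₁ : (1 : ℤ) ≤ 5 * (2 * k) ^ 2 := by
      exact_mod_cast (by nlinarith : 1 ≤ 5 * (2 * k) ^ 2)
    have hpow : (0 : ℤ) ≤ 2 ^ (m + 1) := by positivity
    exact hgap.trans (le_mul_of_one_le_left (hpow.trans hgap) hk₁)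

theorem two_rpow_sqrt_le_mul_sq {x : ℝ} (hx : 4 ≤ x) (hx' : x ≤ 64) :
    (2 : ℝ) ^ √x ≤ 5 * x ^ 2 := by
  have hbound {s : ℕ} (hs : x ≤ s ^ 2) : (2 : ℝ) ^ √x ≤ 2 ^ s := by
    rw [← rpow_natCast]
    exact rpow_le_rpow_of_exponent_le one_le_two (sqrt_le_iff.2 ⟨by positivity, hs⟩)
  rcases le_total x 9 with h | h
  · exact (hbound (s := 3) (by norm_num [h])).trans (by nlinarith)
  · exact (hbound (s := 8) (by norm_num [hx'])).trans (by nlinarith)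

theorem two_rpow_sqrt_le_mul_coeffGap_self {n k : ℕ} (hn : 8 ≤ n) (hk : 2 ≤ k)
    (hkn : 2 * k ≤ n ^ 2) :
    (2 : ℝ) ^ √(2 * k) ≤ 5 * (2 * k) ^ 2 * coeffGap n n k := by
  have hkR : (2 : ℝ) ≤ k := by exact_mod_cast hk
  obtain ⟨m, hm, hm'⟩ : ∃ m, m ^ 2 < 2 * k ∧ 2 * k ≤ (m + 1) ^ 2 := by
    refine ⟨Nat.sqrt (2 * k - 1), ?_, ?_⟩
    · have := Nat.sqrt_le' (2 * k - 1)
      lia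
    · have := Nat.lt_succ_sqrt' (2 * k - 1)
      lia
  rcases lt_or_ge m 8 with hlt | hge
  · have hk₃₂ : k ≤ 32 := by nlinarith
    have hgap : 1 ≤ coeffGap n n k :=
      (coeffGap_eight_pos hk hk₃₂).trans_le (coeffGap_self_mono hn (by lia))
    have hgapR : (1 : ℝ) ≤ coeffGap n n k := by exact_mod_cast hgap
    have hk₃₂R : (k : ℝ) ≤ 32 := by exact_mod_cast hk₃₂
    exact (two_rpow_sqrt_le_mul_sq (by linarith) (by linarith)).trans
      (le_mul_of_one_le_right (by positivity) hgapR)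
  · have hmn : m + 1 ≤ n := lt_of_pow_lt_pow_left₀ 2 n.zero_le (hm.trans_le hkn)
    have hgap : (2 : ℤ) ^ (m + 1) ≤ 5 * (2 * k) ^ 2 * coeffGap n n k :=
      (two_pow_le_mul_coeffGap_succ_self hge hm hm').trans <| by
        gcongr
        exact coeffGap_self_mono hmn (by rwa [← sq])
    have hsqrt : √(2 * k) ≤ (m + 1 : ℕ) :=
      sqrt_le_iff.2 ⟨by positivity, by exact_mod_cast hm'⟩
    calc (2 : ℝ) ^ √(2 * k) ≤ 2 ^ ((m + 1 : ℕ) : ℝ) :=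
          rpow_le_rpow_of_exponent_le one_le_two hsqrt
      _ = 2 ^ (m + 1) := rpow_natCast 2 (m + 1)
      _ ≤ 5 * (2 * k) ^ 2 * coeffGap n n k := by exact_mod_cast hgap

theorem sqrt_div_pi_sq_le : √(27 / 8) / π ^ 2 ≤ 1 / 5 := by
  have hsqrt : √(27 / 8) ≤ 1.84 := sqrt_le_iff.2 (by norm_num)
  have hpi : 3.14 ^ 2 ≤ π ^ 2 := by
    gcongr
    exact pi_gt_d2.le
  rw [div_le_div_iff₀ (by positivity) (by norm_num)]
  linarith

end AllSquares

/-- For `n ≥ 8` and `2 ≤ k` with `2k ≤ n²`, one has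
`p_k(n,n) − p_{k−1}(n,n) ≥ C · 2^{√(2k)} / (2k)^{9/4}` where `C = √(27/8)/π²`. -/
theorem square_qbinomial_lower_bound (n k : ℕ) (hn : 8 ≤ n) (hk1 : 2 ≤ k)
    (hk2 : 2 * k ≤ n ^ 2) :
    ((rectPartitions k n n : ℝ) - (rectPartitions (k - 1) n n : ℝ)) ≥
      (Real.sqrt (27 / 8) / Real.pi ^ 2) *
        (2 : ℝ) ^ Real.sqrt (2 * (k : ℝ)) / (2 * (k : ℝ)) ^ ((9 : ℝ) / 4) := by
  have hgap : (coeffGap n n k : ℝ) = rectPartitions k n n - rectPartitions (k - 1) n n := by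
    obtain ⟨j, rfl⟩ : ∃ j, k = j + 1 := ⟨k - 1, by lia⟩
    simp [coeffGap_succ]
  have hk : (2 : ℝ) ≤ k := by exact_mod_cast hk1
  have hgap₀ : (0 : ℝ) ≤ coeffGap n n k := by
    exact_mod_cast coeffGap_nonneg (by lia)
  have hpow : (2 * k : ℝ) ^ 2 ≤ (2 * k : ℝ) ^ ((9 : ℝ) / 4) := by
    rw [← Real.rpow_two]
    exact Real.rpow_le_rpow_of_exponent_le (by linarith) (by norm_num)
  rw [ge_iff_le, ← hgap, div_le_iff₀ (by positivity)]
  calc √(27 / 8) / Real.pi ^ 2 * 2 ^ √(2 * k : ℝ)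
      ≤ 1 / 5 * (5 * (2 * k) ^ 2 * coeffGap n n k) :=
        mul_le_mul sqrt_div_pi_sq_le (two_rpow_sqrt_le_mul_coeffGap_self hn hk1 hk2)
          (by positivity) (by norm_num)
    _ = coeffGap n n k * (2 * k) ^ 2 := by ring
    _ ≤ coeffGap n n k * (2 * k : ℝ) ^ ((9 : ℝ) / 4) := mul_le_mul_of_nonneg_left hpow hgap₀
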